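/- arXiv:1711.00680 — 2 statements merged into one kernel-verified Lean document; each statement's English description precedes it below -/
import Mathlib

section
/- Let A, B, C be nonempty pairwise disjoint sets forming a partition of M ⊆ V, and consider the three conditions: (1) 𝔛_M is strictly collapsible over A into 𝔛_{B∪C} with respect to λ_{B'}^M and λ_{C'}^M for every nonempty B' ⊆ B and nonempty C' ⊆ C; (2) 𝔛_M is strictly collapsible over B into 𝔛_{A∪C} with respect to λ_{A'}^M and λ_{C'}^M for every nonempty A' ⊆ A and nonempty C' ⊆ C; (3) 𝔛_M is strictly collapsible over C into 𝔛_{A∪B} with respect to λ_{A'}^M and λ_{B'}^M for every nonempty A' ⊆ A and nonempty B' ⊆ B. Then for any two distinct conditions among (1), (2), (3), their conjunction holds if and only if X_A, X_B, X_C are mutually independent, i.e., p_M(x) = p_A(x_A)·p_B(x_B)·p_C(x_C) for all x ∈ 𝔛_M. -/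
open Finset

variable {V : Type*} [Fintype V] [DecidableEq V]
variable {𝔛 : V → Type*} [∀ v, Fintype (𝔛 v)] [∀ v, DecidableEq (𝔛 v)]
  [∀ v, Nonempty (𝔛 v)]

/-- The marginal `p_A` of a distribution `p` on the full table, evaluated at the
`A`-coordinates of `x`. -/
noncomputable def margin (p : (∀ v, 𝔛 v) → ℝ) (A : Finset V) (x : ∀ v, 𝔛 v) : ℝ :=
  ∑ y ∈ Finset.univ.filter (fun y : ∀ v, 𝔛 v => ∀ v ∈ A, y v = x v), p y

/-- `ν_L^M(x_L) = (1/|𝔛_{M∖L}|) Σ_{j ∈ 𝔛_M : j_L = x_L} log p_M(j)`, written with sums over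
full configurations (for `L ⊆ M` the extra coordinates cancel against the normalization). -/
noncomputable def nu (p : (∀ v, 𝔛 v) → ℝ) (L M : Finset V) (x : ∀ v, 𝔛 v) : ℝ :=
  (∏ v ∈ Lᶜ, (Fintype.card (𝔛 v) : ℝ))⁻¹ *
    ∑ j ∈ Finset.univ.filter (fun j : ∀ v, 𝔛 v => ∀ v ∈ L, j v = x v),
      Real.log (margin p M j)

/-- The marginal log-linear parameter `λ_L^M(x_L) = Σ_{L' ⊆ L} (−1)^{|L∖L'|} ν_{L'}^M(x_{L'})`. -/
noncomputable def mll (p : (∀ v, 𝔛 v) → ℝ) (L M : Finset V) (x : ∀ v, 𝔛 v) : ℝ :=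
  ∑ L' ∈ L.powerset, (-1 : ℝ) ^ ((L \ L').card) * nu p L' M x

/-- `𝔛_N` is strictly collapsible over `N ∖ M'` into `𝔛_{M'}` with respect to `λ_L^N`:
`λ_L^{M'} = λ_L^N` and `λ_Z^N = 0` for every `Z ⊆ N` with `L ⊊ Z` meeting `N ∖ M'`. -/
def StrictlyCollapsible (p : (∀ v, 𝔛 v) → ℝ) (N M' L : Finset V) : Prop :=
  (∀ x : ∀ v, 𝔛 v, mll p L M' x = mll p L N x) ∧
  (∀ Z ⊆ N, L ⊂ Z → (Z ∩ (N \ M')).Nonempty → ∀ x : ∀ v, 𝔛 v, mll p Z N x = 0)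

/-- Condition: `𝔛_M` is strictly collapsible over `M ∖ Mar` into `𝔛_{Mar}` with respect to
`λ_{S'}^M` for every nonempty `S' ⊆ S` and `λ_{T'}^M` for every nonempty `T' ⊆ T`. -/
def CondOver (p : (∀ v, 𝔛 v) → ℝ) (M Mar S T : Finset V) : Prop :=
  (∀ S' ⊆ S, S'.Nonempty → StrictlyCollapsible p M Mar S') ∧
  (∀ T' ⊆ T, T'.Nonempty → StrictlyCollapsible p M Mar T')

/-- `g` depends only on the coordinates in `S`. -/
def Dep (S : Finset V) (g : (∀ v, 𝔛 v) → ℝ) : Prop :=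
  ∀ x y, (∀ v ∈ S, x v = y v) → g x = g y

/-- Total number of configurations. -/
noncomputable def tot (𝔛 : V → Type*) [∀ v, Fintype (𝔛 v)] : ℝ := (Fintype.card (∀ v, 𝔛 v) : ℝ)

/-- Number of configurations of the coordinates in `S`. -/
noncomputable def kap (𝔛 : V → Type*) [∀ v, Fintype (𝔛 v)] (S : Finset V) : ℝ :=
  ∏ v ∈ S, (Fintype.card (𝔛 v) : ℝ)

/-- Average over the coordinates outside `S`. -/
noncomputable def av (S : Finset V) (g : (∀ v, 𝔛 v) → ℝ) (x : ∀ v, 𝔛 v) : ℝ :=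
  (tot 𝔛)⁻¹ * ∑ y, g (S.piecewise x y)

/-- Moebius transform. -/
noncomputable def mob (F : Finset V → ℝ) (L : Finset V) : ℝ :=
  ∑ L' ∈ L.powerset, (-1 : ℝ) ^ ((L \ L').card) * F L'

lemma tot_pos : 0 < tot 𝔛 := by
  unfold tot; exact_mod_cast Fintype.card_pos

lemma kap_pos (S : Finset V) : 0 < kap 𝔛 S := by
  unfold kap; exact Finset.prod_pos fun v _ => by exact_mod_cast Fintype.card_pos

lemma kap_union {S T : Finset V} (h : Disjoint S T) : kap 𝔛 (S ∪ T) = kap 𝔛 S * kap 𝔛 T :=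
  Finset.prod_union h

lemma kap_compl (S : Finset V) : ∏ v ∈ Sᶜ, (Fintype.card (𝔛 v) : ℝ) = tot 𝔛 / kap 𝔛 S := by
  rw [eq_div_iff (kap_pos S).ne']
  unfold kap tot
  rw [Finset.prod_compl_mul_prod, Fintype.card_pi]
  push_cast; rfl

/-- Uniform independence of complementary coordinate blocks. -/
lemma sum_pair (A : Finset V) (H : (∀ v, 𝔛 v) → (∀ v, 𝔛 v) → ℝ) :
    ∑ y, ∑ z, H y z = ∑ y, ∑ z, H (A.piecewise y z) (A.piecewise z y) := by
  rw [← Fintype.sum_prod_type', ← Fintype.sum_prod_type']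
  let e : ((∀ v, 𝔛 v) × (∀ v, 𝔛 v)) → ((∀ v, 𝔛 v) × (∀ v, 𝔛 v)) :=
    fun q => (A.piecewise q.1 q.2, A.piecewise q.2 q.1)
  have he : Function.Involutive e := by
    rintro ⟨y, z⟩
    ext v <;> by_cases h : v ∈ A <;> simp [e, h]
  exact (Equiv.sum_comp he.toPerm (fun q => H q.1 q.2)).symm

lemma sum_indep (A : Finset V) (φ ψ : (∀ v, 𝔛 v) → ℝ) (hφ : Dep A φ) (hψ : Dep Aᶜ ψ) :
    tot 𝔛 * ∑ y, φ y * ψ y = (∑ y, φ y) * ∑ y, ψ y := by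
  rw [Finset.sum_mul_sum, sum_pair A]
  have : ∀ y z : (∀ v, 𝔛 v), φ (A.piecewise y z) * ψ (A.piecewise z y) = φ y * ψ y := by
    intro y z
    rw [hφ (A.piecewise y z) y, hψ (A.piecewise z y) y]
    · intro v hv; simp at hv; simp [hv]
    · intro v hv; simp [hv]
  simp only [this]
  simp [tot, Finset.mul_sum]

lemma card_fil (A : Finset V) (x : ∀ v, 𝔛 v) :
    ((Finset.univ.filter (fun y : ∀ v, 𝔛 v => ∀ v ∈ A, y v = x v)).card : ℝ)
      = tot 𝔛 / kap 𝔛 A := by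
  have : Finset.univ.filter (fun y : ∀ v, 𝔛 v => ∀ v ∈ A, y v = x v)
      = Fintype.piFinset (fun v => if v ∈ A then {x v} else Finset.univ) := by
    ext y
    simp only [Finset.mem_filter, Finset.mem_univ, true_and, Fintype.mem_piFinset]
    refine forall_congr' fun v => ?_
    by_cases h : v ∈ A <;> simp [h]
  rw [this, Fintype.card_piFinset, ← kap_compl]
  push_cast
  rw [← Finset.prod_compl_mul_prod A]
  have h2 : ∏ v ∈ A, (((if v ∈ A then {x v} else Finset.univ : Finset (𝔛 v)).card : ℝ)) = 1 := by
    apply Finset.prod_eq_one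
    intro v hv; simp [hv]
  rw [h2, mul_one]
  apply Finset.prod_congr rfl
  intro v hv
  simp at hv; simp [hv]

lemma sum_fil (A : Finset V) (g : (∀ v, 𝔛 v) → ℝ) (x : ∀ v, 𝔛 v) :
    ∑ y ∈ Finset.univ.filter (fun y : ∀ v, 𝔛 v => ∀ v ∈ A, y v = x v), g y
      = tot 𝔛 / kap 𝔛 A * av A g x := by
  have h := sum_indep A (fun y => if ∀ v ∈ A, y v = x v then (1 : ℝ) else 0)
    (fun y => g (A.piecewise x y)) (by
      intro y z h
      have : (∀ v ∈ A, y v = x v) ↔ (∀ v ∈ A, z v = x v) :=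
        forall₂_congr fun v hv => by rw [h v hv]
      by_cases hz : ∀ v ∈ A, z v = x v
      · exact (if_pos (this.2 hz)).trans (if_pos hz).symm
      · exact (if_neg (fun hy => hz (this.1 hy))).trans (if_neg hz).symm) (by
      intro y z h
      change g (A.piecewise x y) = g (A.piecewise x z)
      congr 1
      ext v
      by_cases hv : v ∈ A
      · simp [hv]
      · simp [hv, h v (by simpa using hv)])
  have h1 : ∑ y : (∀ v, 𝔛 v), (if ∀ v ∈ A, y v = x v then (1 : ℝ) else 0) = tot 𝔛 / kap 𝔛 A := by
    rw [← card_fil A x]; simp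
  have h2 : ∑ y : (∀ v, 𝔛 v), (if ∀ v ∈ A, y v = x v then (1 : ℝ) else 0) * g (A.piecewise x y)
      = ∑ y ∈ Finset.univ.filter (fun y : ∀ v, 𝔛 v => ∀ v ∈ A, y v = x v), g y := by
    rw [Finset.sum_filter]
    apply Finset.sum_congr rfl
    intro y _
    split_ifs with hy
    · rw [one_mul]; congr 1; ext v
      by_cases hv : v ∈ A
      · simp [hv, hy v hv]
      · simp [hv]
    · simp
  rw [h1, h2] at h
  have := (tot_pos (𝔛 := 𝔛)).ne'
  apply mul_left_cancel₀ this
  rw [h]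
  unfold av
  field_simp

lemma margin_eq (p : (∀ v, 𝔛 v) → ℝ) (A : Finset V) (x : ∀ v, 𝔛 v) :
    margin p A x = tot 𝔛 / kap 𝔛 A * av A p x := sum_fil A p x

lemma nu_eq (p : (∀ v, 𝔛 v) → ℝ) (L M : Finset V) (x : ∀ v, 𝔛 v) :
    nu p L M x = av L (fun j => Real.log (margin p M j)) x := by
  unfold nu
  rw [sum_fil, kap_compl, ← mul_assoc, inv_mul_cancel₀, one_mul]
  exact (div_pos tot_pos (kap_pos L)).ne'

lemma mll_eq (p : (∀ v, 𝔛 v) → ℝ) (L M : Finset V) (x : ∀ v, 𝔛 v) :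
    mll p L M x = mob (fun L' => av L' (fun j => Real.log (margin p M j)) x) L := by
  unfold mll mob
  simp only [nu_eq]

lemma dep_av (S : Finset V) (g : (∀ v, 𝔛 v) → ℝ) : Dep S (av S g) := by
  intro x y h
  unfold av
  congr 1
  apply Finset.sum_congr rfl
  intro z _
  congr 1
  ext v
  by_cases hv : v ∈ S
  · simp [hv, h v hv]
  · simp [hv]

lemma Dep.mono {S T : Finset V} {g : (∀ v, 𝔛 v) → ℝ} (h : Dep S g) (hST : S ⊆ T) : Dep T g :=
  fun x y hxy => h x y fun v hv => hxy v (hST hv)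

lemma dep_margin (p : (∀ v, 𝔛 v) → ℝ) (S : Finset V) : Dep S (margin p S) := by
  intro x y h
  rw [margin_eq, margin_eq, dep_av S p x y h]

lemma margin_pos (p : (∀ v, 𝔛 v) → ℝ) (hp : ∀ x, 0 < p x) (S : Finset V) (x : ∀ v, 𝔛 v) :
    0 < margin p S x :=
  Finset.sum_pos (fun y _ => hp y) ⟨x, by simp⟩

/-- A function of the `S`-coordinates times anything, averaged over the rest. -/
lemma av_mul (S : Finset V) (g h : (∀ v, 𝔛 v) → ℝ) (hg : Dep S g) (x : ∀ v, 𝔛 v) :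
    av S (fun y => g y * h y) x = g x * av S h x := by
  unfold av
  have : ∀ y, g (S.piecewise x y) = g x := fun y => hg _ _ fun v hv => by simp [hv]
  simp only [this, ← Finset.mul_sum]
  ring

lemma av_dep (S : Finset V) (g : (∀ v, 𝔛 v) → ℝ) (hg : Dep S g) (x : ∀ v, 𝔛 v) :
    av S g x = g x := by
  unfold av
  have : ∀ y, g (S.piecewise x y) = g x := fun y => hg _ _ fun v hv => by simp [hv]
  simp only [this]
  have := (tot_pos (𝔛 := 𝔛)).ne'
  simp only [Finset.sum_const, Finset.card_univ, nsmul_eq_mul]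
  change (tot 𝔛)⁻¹ * (tot 𝔛 * g x) = g x
  field_simp

lemma av_av (L M : Finset V) (g : (∀ v, 𝔛 v) → ℝ) (x : ∀ v, 𝔛 v) :
    av L (av M g) x = av (L ∩ M) g x := by
  unfold av
  rw [← Finset.mul_sum]
  have h1 : ∀ y z : (∀ v, 𝔛 v), M.piecewise (L.piecewise x y) z
      = (L ∩ M).piecewise x (M.piecewise y z) := by
    intro y z; ext v
    by_cases h : v ∈ L <;> by_cases h' : v ∈ M <;> simp [h, h']
  simp only [h1]
  rw [← sum_pair M (fun y _ => g ((L ∩ M).piecewise x y))]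
  simp only [Finset.sum_const, Finset.card_univ, nsmul_eq_mul, ← Finset.mul_sum]
  change (tot 𝔛)⁻¹ * ((tot 𝔛)⁻¹ * (tot 𝔛 * _)) = _
  have := (tot_pos (𝔛 := 𝔛)).ne'
  field_simp

lemma av_margin (p : (∀ v, 𝔛 v) → ℝ) (L M : Finset V) (x : ∀ v, 𝔛 v) :
    av L (margin p M) x = tot 𝔛 / kap 𝔛 M * av (L ∩ M) p x := by
  rw [← av_av]
  have : margin p M = fun y => tot 𝔛 / kap 𝔛 M * av M p y := funext fun y => margin_eq p M y
  rw [this]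
  exact av_mul L (fun _ => tot 𝔛 / kap 𝔛 M) (av M p) (fun _ _ _ => rfl) x

lemma av_empty (p : (∀ v, 𝔛 v) → ℝ) (hsum : ∑ x, p x = 1) (x : ∀ v, 𝔛 v) :
    av ∅ p x = (tot 𝔛)⁻¹ := by
  unfold av; simp [hsum]

lemma mob_insert (F : Finset V → ℝ) (a : V) (Z : Finset V) (ha : a ∉ Z) :
    mob F (insert a Z) = mob (fun S => F (insert a S)) Z - mob F Z := by
  unfold mob
  rw [Finset.sum_powerset_insert ha, add_comm, sub_eq_add_neg, ← Finset.sum_neg_distrib]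
  congr 1
  · apply Finset.sum_congr rfl
    intro S hS
    have : insert a Z \ insert a S = Z \ S := by
      ext v; simp only [Finset.mem_sdiff, Finset.mem_insert]
      constructor
      · tauto
      · rintro ⟨h1, h2⟩
        refine ⟨Or.inr h1, ?_⟩
        rintro (h | h)
        · exact ha (h ▸ h1)
        · exact h2 h
    rw [this]
  · apply Finset.sum_congr rfl
    intro S hS
    have haS : a ∉ S := fun h => ha (Finset.mem_powerset.1 hS h)
    rw [Finset.insert_sdiff_of_notMem _ haS, Finset.card_insert_of_notMem, pow_succ]
    · ring
    · simp [ha]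

lemma sum_mob (L : Finset V) : ∀ F : Finset V → ℝ, ∑ Z ∈ L.powerset, mob F Z = F L := by
  induction L using Finset.induction_on with
  | empty => intro F; simp [mob]
  | insert a L ha ih =>
    intro F
    rw [Finset.sum_powerset_insert ha, ← Finset.sum_add_distrib]
    rw [← ih (fun S => F (insert a S))]
    apply Finset.sum_congr rfl
    intro Z hZ
    rw [mob_insert F a Z fun h => ha (Finset.mem_powerset.1 hZ h)]
    ring

lemma mob_add (F G : Finset V → ℝ) (L : Finset V) :
    mob (fun S => F S + G S) L = mob F L + mob G L := by
  unfold mob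
  rw [← Finset.sum_add_distrib]
  exact Finset.sum_congr rfl fun _ _ => by ring

lemma av_add (S : Finset V) (f g : (∀ v, 𝔛 v) → ℝ) (x : ∀ v, 𝔛 v) :
    av S (fun y => f y + g y) x = av S f x + av S g x := by
  unfold av
  rw [Finset.sum_add_distrib, mul_add]

lemma mob_av_zero (S L : Finset V) (f : (∀ v, 𝔛 v) → ℝ) (hf : Dep S f) (h : ¬ L ⊆ S)
    (x : ∀ v, 𝔛 v) : mob (fun L' => av L' f x) L = 0 := by
  obtain ⟨a, haL, haS⟩ := Finset.not_subset.1 h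
  rw [← Finset.insert_erase haL, mob_insert _ _ _ (Finset.notMem_erase a L), sub_eq_zero]
  congr 1
  funext T
  have hf' : av S f = f := funext fun y => av_dep S f hf y
  have key : ∀ T, av T f x = av (T ∩ S) f x := by
    intro T
    rw [← av_av, hf']
  rw [key, key T, Finset.insert_inter_of_notMem haS]

lemma dep_mob (Z : Finset V) (f : (∀ v, 𝔛 v) → ℝ) :
    Dep Z (fun x => mob (fun L' => av L' f x) Z) := by
  intro x y h
  unfold mob
  apply Finset.sum_congr rfl
  intro S hS
  simp only []
  rw [dep_av S f x y fun v hv => h v (Finset.mem_powerset.1 hS hv)]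

/-- If all mixed interactions vanish, the swap identity holds. -/
lemma swap_of_zero (p : (∀ v, 𝔛 v) → ℝ) (hp : ∀ x, 0 < p x) (A M : Finset V)
    (h : ∀ Z ⊆ M, (Z ∩ A).Nonempty → ¬ Z ⊆ A → ∀ x, mll p Z M x = 0)
    (x y : ∀ v, 𝔛 v) :
    margin p M x * margin p M y
      = margin p M (A.piecewise y x) * margin p M (A.piecewise x y) := by
  have hlog : ∀ z, Real.log (margin p M z) = ∑ Z ∈ M.powerset, mll p Z M z := by
    intro z
    simp only [mll_eq]
    rw [sum_mob M (fun L' => av L' (fun j => Real.log (margin p M j)) z), av_dep]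
    intro a b hab
    simp only []
    rw [dep_margin p M a b hab]
  have hdep : ∀ Z, ∀ a b, (∀ v ∈ Z, a v = b v) → mll p Z M a = mll p Z M b := by
    intro Z a b hab
    rw [mll_eq, mll_eq]
    exact dep_mob Z _ a b hab
  have pos := margin_pos p hp M
  apply Real.log_injOn_pos (Set.mem_Ioi.2 (mul_pos (pos _) (pos _)))
    (Set.mem_Ioi.2 (mul_pos (pos _) (pos _)))
  rw [Real.log_mul (pos _).ne' (pos _).ne', Real.log_mul (pos _).ne' (pos _).ne']
  simp only [hlog, ← Finset.sum_add_distrib]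
  apply Finset.sum_congr rfl
  intro Z hZ
  have hZ := Finset.mem_powerset.1 hZ
  by_cases h1 : Z ⊆ A
  · rw [hdep Z (A.piecewise y x) y fun v hv => by simp [h1 hv],
      hdep Z (A.piecewise x y) x fun v hv => by simp [h1 hv], add_comm]
  by_cases h2 : (Z ∩ A).Nonempty
  · simp only [h Z hZ h2 h1]
  · have h3 : ∀ v ∈ Z, v ∉ A := fun v hv hA => h2 ⟨v, by simp [hv, hA]⟩
    rw [hdep Z (A.piecewise y x) x fun v hv => by simp [h3 v hv],
      hdep Z (A.piecewise x y) y fun v hv => by simp [h3 v hv]]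

lemma prod_of_swap (p : (∀ v, 𝔛 v) → ℝ) (hsum : ∑ x, p x = 1)
    (A R M : Finset V) (hd : Disjoint A R) (hM : M = A ∪ R)
    (h : ∀ x y, margin p M x * margin p M y
      = margin p M (A.piecewise y x) * margin p M (A.piecewise x y)) (x : ∀ v, 𝔛 v) :
    margin p M x = margin p A x * margin p R x := by
  have e1 := sum_indep A (fun y => margin p M (A.piecewise y x))
    (fun y => margin p M (A.piecewise x y)) (by
      intro a b hab
      apply dep_margin
      intro v _
      by_cases hv : v ∈ A
      · simp [hv, hab v hv]
      · simp [hv]) (by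
      intro a b hab
      apply dep_margin
      intro v _
      by_cases hv : v ∈ A
      · simp [hv]
      · simp [hv, hab v (by simpa using hv)])
  simp only [← h] at e1
  rw [← Finset.mul_sum] at e1
  have e2 : ∑ y, margin p M (A.piecewise y x) = ∑ y, margin p M (R.piecewise x y) := by
    apply Finset.sum_congr rfl
    intro y _
    apply dep_margin
    intro v hv
    rw [hM, Finset.mem_union] at hv
    by_cases hA : v ∈ A
    · simp [hA, Finset.disjoint_left.1 hd hA]
    · simp [hA, hv.resolve_left hA]
  have t := (tot_pos (𝔛 := 𝔛)).ne'
  have sA : ∀ S, ∑ y, margin p M (S.piecewise x y) = tot 𝔛 * av S (margin p M) x := by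
    intro S; unfold av; field_simp
  have s0 : ∑ y, margin p M y = tot 𝔛 * av ∅ (margin p M) x := by
    rw [← sA]; simp
  have hAM : A ∩ M = A := Finset.inter_eq_left.2 (hM ▸ Finset.subset_union_left)
  have hRM : R ∩ M = R := Finset.inter_eq_left.2 (hM ▸ Finset.subset_union_right)
  rw [e2, sA, sA, s0, av_margin, av_margin, av_margin, hAM, hRM, Finset.empty_inter,
    av_empty p hsum] at e1
  have kM : kap 𝔛 M = kap 𝔛 A * kap 𝔛 R := by rw [hM, kap_union hd]
  rw [margin_eq p A, margin_eq p R]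
  have a := (kap_pos (𝔛 := 𝔛) A).ne'
  have r := (kap_pos (𝔛 := 𝔛) R).ne'
  rw [kM] at e1
  field_simp at e1 ⊢
  linarith

lemma forward (p : (∀ v, 𝔛 v) → ℝ) (hp : ∀ x, 0 < p x) (hsum : ∑ x, p x = 1)
    (A B C M : Finset V) (hAB : Disjoint A B) (hAC : Disjoint A C) (hBC : Disjoint B C)
    (hM : M = A ∪ B ∪ C)
    (h1 : ∀ Z ⊆ M, (Z ∩ A).Nonempty → (Z ∩ B).Nonempty → ∀ x, mll p Z M x = 0)
    (h2 : ∀ Z ⊆ M, (Z ∩ A).Nonempty → (Z ∩ C).Nonempty → ∀ x, mll p Z M x = 0)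
    (h3 : ∀ Z ⊆ M, (Z ∩ B).Nonempty → (Z ∩ C).Nonempty → ∀ x, mll p Z M x = 0)
    (x : ∀ v, 𝔛 v) :
    margin p M x = margin p A x * margin p B x * margin p C x := by
  have mem : ∀ Z ⊆ M, ∀ v ∈ Z, v ∈ A ∨ v ∈ B ∨ v ∈ C := by
    intro Z hZ v hv
    have := hZ hv
    rw [hM] at this
    simpa [or_assoc] using this
  have sA := swap_of_zero p hp A M (by
    intro Z hZ hZA hn x
    obtain ⟨v, hv, hvA⟩ := Finset.not_subset.1 hn
    rcases (mem Z hZ v hv).resolve_left hvA with h | h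
    · exact h1 Z hZ hZA ⟨v, by simp [hv, h]⟩ x
    · exact h2 Z hZ hZA ⟨v, by simp [hv, h]⟩ x)
  have sB := swap_of_zero p hp B M (by
    intro Z hZ hZB hn x
    obtain ⟨v, hv, hvB⟩ := Finset.not_subset.1 hn
    rcases mem Z hZ v hv with h | h | h
    · exact h1 Z hZ ⟨v, by simp [hv, h]⟩ hZB x
    · exact absurd h hvB
    · exact h3 Z hZ hZB ⟨v, by simp [hv, h]⟩ x)
  have pA := prod_of_swap p hsum A (B ∪ C) M
    (Finset.disjoint_union_right.2 ⟨hAB, hAC⟩) (by rw [hM, Finset.union_assoc]) sA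
  have pBC := prod_of_swap p hsum B C (B ∪ C) hBC rfl (by
    intro x y
    have := sB x (A.piecewise x y)
    rw [pA, pA, pA, pA] at this
    have d : ∀ v ∈ B ∪ C, v ∉ A := by
      intro v hv hA
      rcases Finset.mem_union.1 hv with h | h
      · exact Finset.disjoint_left.1 hAB hA h
      · exact Finset.disjoint_left.1 hAC hA h
    have dB : ∀ v ∈ A, v ∉ B := fun v hA h => Finset.disjoint_left.1 hAB hA h
    rw [dep_margin p A (A.piecewise x y) x (fun v hv => by simp [hv]),
      dep_margin p A (B.piecewise (A.piecewise x y) x) x (fun v hv => by simp [hv, dB v hv]),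
      dep_margin p A (B.piecewise x (A.piecewise x y)) x (fun v hv => by simp [hv, dB v hv]),
      dep_margin p (B ∪ C) (A.piecewise x y) y (fun v hv => by simp [d v hv]),
      dep_margin p (B ∪ C) (B.piecewise (A.piecewise x y) x) (B.piecewise y x)
        (fun v hv => by by_cases hB : v ∈ B <;> simp [hB, d v hv]),
      dep_margin p (B ∪ C) (B.piecewise x (A.piecewise x y)) (B.piecewise x y)
        (fun v hv => by by_cases hB : v ∈ B <;> simp [hB, d v hv])] at this
    have pos := margin_pos p hp A x
    apply mul_left_cancel₀ (mul_pos pos pos).ne'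
    linarith)
  rw [pA, pBC, mul_assoc]

lemma backward (p : (∀ v, 𝔛 v) → ℝ) (hp : ∀ x, 0 < p x) (hsum : ∑ x, p x = 1)
    (R S T M : Finset V) (hRS : Disjoint R S) (hRT : Disjoint R T) (hST : Disjoint S T)
    (hM : M = R ∪ S ∪ T)
    (h : ∀ x, margin p M x = margin p R x * margin p S x * margin p T x) :
    CondOver p M (S ∪ T) S T := by
  have hd : Disjoint R (S ∪ T) := Finset.disjoint_union_right.2 ⟨hRS, hRT⟩
  have hM' : M = R ∪ (S ∪ T) := by rw [hM, Finset.union_assoc]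
  have t := (tot_pos (𝔛 := 𝔛)).ne'
  have kR := (kap_pos (𝔛 := 𝔛) R).ne'
  have kST := (kap_pos (𝔛 := 𝔛) (S ∪ T)).ne'
  have hmar : ∀ x, margin p (S ∪ T) x = margin p S x * margin p T x := by
    intro x
    have e1 := av_margin p (S ∪ T) M x
    have hf : margin p M = fun y => (margin p S y * margin p T y) * margin p R y := by
      funext y; rw [h]; ring
    rw [hf, av_mul, av_margin, Finset.disjoint_iff_inter_eq_empty.1 hd.symm, av_empty p hsum,
      Finset.inter_eq_left.2 (hM' ▸ Finset.subset_union_right), hM', kap_union hd] at e1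
    · rw [margin_eq p (S ∪ T)]
      field_simp at e1 ⊢
      linarith
    · intro a b hab
      simp only []
      rw [dep_margin p S a b fun v hv => hab v (by simp [hv]),
        dep_margin p T a b fun v hv => hab v (by simp [hv])]
  have dl : ∀ S, Dep S (fun j => Real.log (margin p S j)) := by
    intro S a b hab
    simp only []
    rw [dep_margin p S a b hab]
  have pos := fun S x => (margin_pos p hp S x).ne'
  have mST : ∀ L x, mll p L (S ∪ T) x = mll p L S x + mll p L T x := by
    intro L x
    simp only [mll_eq, ← mob_add, ← av_add]
    congr 1; funext L'; congr 1; funext j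
    rw [hmar, Real.log_mul (pos _ _) (pos _ _)]
  have mM : ∀ L x, mll p L M x = mll p L R x + mll p L (S ∪ T) x := by
    intro L x
    simp only [mll_eq, ← mob_add, ← av_add]
    congr 1; funext L'; congr 1; funext j
    rw [← Real.log_mul (pos _ _) (pos _ _), h, hmar, mul_assoc]
  have zero : ∀ L S x, ¬ L ⊆ S → mll p L S x = 0 := by
    intro L S x hL
    rw [mll_eq]
    exact mob_av_zero S L _ (dl S) hL x
  have main : ∀ L, L.Nonempty → L ⊆ S ∪ T → StrictlyCollapsible p M (S ∪ T) L := by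
    intro L hL hLs
    obtain ⟨a, ha⟩ := hL
    have haR : a ∉ R := fun h' => Finset.disjoint_left.1 hd h' (hLs ha)
    refine ⟨fun x => ?_, fun Z hZ hLZ hne x => ?_⟩
    · rw [mM, zero L R x fun h' => haR (h' ha), zero_add]
    · obtain ⟨b, hb⟩ := hne
      simp only [Finset.mem_inter, Finset.mem_sdiff, Finset.mem_union, not_or] at hb
      rw [mM, mST, zero Z R x fun h' => haR (h' (hLZ.1 ha)),
        zero Z S x fun h' => hb.2.2.1 (h' hb.1), zero Z T x fun h' => hb.2.2.2 (h' hb.1)]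
      simp
  exact ⟨fun S' hS' hne => main S' hne (hS'.trans Finset.subset_union_left),
    fun T' hT' hne => main T' hne (hT'.trans Finset.subset_union_right)⟩

lemma cond_zero (p : (∀ v, 𝔛 v) → ℝ) (R S T M : Finset V) (hRS : Disjoint R S)
    (hRT : Disjoint R T) (hRM : R ⊆ M) (h : CondOver p M (S ∪ T) S T) :
    (∀ Z ⊆ M, (Z ∩ R).Nonempty → (Z ∩ S).Nonempty → ∀ x, mll p Z M x = 0) ∧
    (∀ Z ⊆ M, (Z ∩ R).Nonempty → (Z ∩ T).Nonempty → ∀ x, mll p Z M x = 0) := by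
  have key : ∀ Q, Disjoint R Q →
      (∀ Q' ⊆ Q, Q'.Nonempty → StrictlyCollapsible p M (S ∪ T) Q') →
      ∀ Z ⊆ M, (Z ∩ R).Nonempty → (Z ∩ Q).Nonempty → ∀ x, mll p Z M x = 0 := by
    intro Q hQ hc Z hZ ⟨r, hr⟩ hne x
    rw [Finset.mem_inter] at hr
    refine (hc (Z ∩ Q) Finset.inter_subset_right hne).2 Z hZ ?_ ?_ x
    · refine ⟨Finset.inter_subset_left, fun h' => ?_⟩
      exact Finset.disjoint_left.1 hQ hr.2 (Finset.mem_inter.1 (h' hr.1)).2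
    · refine ⟨r, ?_⟩
      simp [hr.1, hRM hr.2, Finset.disjoint_left.1 hRS hr.2, Finset.disjoint_left.1 hRT hr.2]
  exact ⟨key S hRS h.1, key T hRT h.2⟩

theorem stmt15 (p : (∀ v, 𝔛 v) → ℝ) (hp : ∀ x, 0 < p x) (hsum : ∑ x, p x = 1)
    (A B C M : Finset V) (hA : A.Nonempty) (hB : B.Nonempty) (hC : C.Nonempty)
    (hAB : Disjoint A B) (hAC : Disjoint A C) (hBC : Disjoint B C)
    (hM : M = A ∪ B ∪ C) :
    ((CondOver p M (B ∪ C) B C ∧ CondOver p M (A ∪ C) A C) ↔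
      (∀ x : ∀ v, 𝔛 v,
        margin p M x = margin p A x * margin p B x * margin p C x)) ∧
    ((CondOver p M (B ∪ C) B C ∧ CondOver p M (A ∪ B) A B) ↔
      (∀ x : ∀ v, 𝔛 v,
        margin p M x = margin p A x * margin p B x * margin p C x)) ∧
    ((CondOver p M (A ∪ C) A C ∧ CondOver p M (A ∪ B) A B) ↔
      (∀ x : ∀ v, 𝔛 v,
        margin p M x = margin p A x * margin p B x * margin p C x)) := by
  have sA : A ⊆ M := by rw [hM]; intro v hv; simp [hv]
  have sB : B ⊆ M := by rw [hM]; intro v hv; simp [hv]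
  have sC : C ⊆ M := by rw [hM]; intro v hv; simp [hv]
  have z1 := cond_zero p A B C M hAB hAC sA
  have z2 := cond_zero p B A C M hAB.symm hBC sB
  have z3 := cond_zero p C A B M hAC.symm hBC.symm sC
  have f := forward p hp hsum A B C M hAB hAC hBC hM
  have b1 := backward p hp hsum A B C M hAB hAC hBC hM
  have b2 : (∀ x, margin p M x = margin p A x * margin p B x * margin p C x) →
      CondOver p M (A ∪ C) A C := fun h =>
    backward p hp hsum B A C M hAB.symm hBC hAC (by rw [hM, Finset.union_comm A B])
      fun x => by rw [h]; ring
  have b3 : (∀ x, margin p M x = margin p A x * margin p B x * margin p C x) →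
      CondOver p M (A ∪ B) A B := fun h =>
    backward p hp hsum C A B M hAC.symm hBC.symm hAB
      (by rw [hM, Finset.union_assoc C, Finset.union_comm C]) fun x => by rw [h]; ring
  refine ⟨⟨fun h => ?_, fun h => ⟨b1 h, b2 h⟩⟩, ⟨fun h => ?_, fun h => ⟨b1 h, b3 h⟩⟩,
    ⟨fun h => ?_, fun h => ⟨b2 h, b3 h⟩⟩⟩
  · exact f (z1 h.1).1 (z1 h.1).2 (z2 h.2).2
  · exact f (z1 h.1).1 (z1 h.1).2 fun Z hZ h1 h2 => (z3 h.2).2 Z hZ h2 h1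
  · exact f (fun Z hZ h1 h2 => (z2 h.1).1 Z hZ h2 h1)
      (fun Z hZ h1 h2 => (z3 h.2).1 Z hZ h2 h1) (z2 h.1).2
end

section
/- For every L ⊆ M ⊆ V and every x_L ∈ 𝔛_L, the marginal log-linear parameter admits the alternative expression λ_L^M(x_L) = (1/|𝔛_M|) Σ_{y ∈ 𝔛_M} log p_M(y) · ∏_{v ∈ L} (|𝔛_v|·𝟙[x_v = y_v] − 1), where 𝟙 denotes the indicator function; that is, the Möbius-sum definition of λ_L^M and this product formula are equivalent. -/
open Finset

variable {V : Type*} [Fintype V] [DecidableEq V]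
variable {𝔛 : V → Type*} [∀ v, Fintype (𝔛 v)] [∀ v, DecidableEq (𝔛 v)]
  [∀ v, Nonempty (𝔛 v)]

theorem stmt19 (p : (∀ v, 𝔛 v) → ℝ) (hp : ∀ x, 0 < p x) (hsum : ∑ x, p x = 1)
    (L M : Finset V) (hLM : L ⊆ M) (x : ∀ v, 𝔛 v) :
    mll p L M x =
      (∏ v : V, (Fintype.card (𝔛 v) : ℝ))⁻¹ *
        ∑ y : ∀ v, 𝔛 v, Real.log (margin p M y) *
          ∏ v ∈ L, ((Fintype.card (𝔛 v) : ℝ) * (if x v = y v then 1 else 0) - 1) := by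
  have hc : ∀ v : V, (Fintype.card (𝔛 v) : ℝ) ≠ 0 := fun v => by
    exact_mod_cast Fintype.card_ne_zero
  have key : ∀ y : ∀ v, 𝔛 v,
      ∏ v ∈ L, ((Fintype.card (𝔛 v) : ℝ) * (if x v = y v then 1 else 0) - 1) =
      ∑ t ∈ L.powerset, (∏ v ∈ t, (Fintype.card (𝔛 v) : ℝ)) *
        (if ∀ v ∈ t, y v = x v then 1 else 0) * (-1 : ℝ) ^ ((L \ t).card) := by
    intro y
    simp_rw [sub_eq_add_neg]
    rw [Finset.prod_add]
    refine Finset.sum_congr rfl fun t _ => ?_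
    rw [Finset.prod_const, Finset.prod_mul_distrib, Finset.prod_ite_zero]
    simp [eq_comm]
  simp_rw [key, mll, nu, Finset.mul_sum]
  rw [Finset.sum_comm]
  refine Finset.sum_congr rfl fun t _ => ?_
  rw [Finset.sum_filter]
  refine Finset.sum_congr rfl fun y _ => ?_
  rw [← Finset.prod_mul_prod_compl t (fun v => (Fintype.card (𝔛 v) : ℝ))]
  have h1 : ∏ v ∈ t, (Fintype.card (𝔛 v) : ℝ) ≠ 0 := Finset.prod_ne_zero_iff.2 fun v _ => hc v
  have h2 : ∏ v ∈ tᶜ, (Fintype.card (𝔛 v) : ℝ) ≠ 0 := Finset.prod_ne_zero_iff.2 fun v _ => hc v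
  split_ifs
  · field_simp
  · simp
end
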